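/- Let E be a fundamental set of type (M,n) with associated complex P. Then E satisfies the SEU property if and only if every ridge of P is contained in exactly two facets of P. -/

import Mathlib

/-!
Complementation in the ground set exchanges the facets of the complex with the members of `E`
(`isFacet_iff`), and the ridges with the sets `insert k P`, where `P ∈ E` and `k ∉ P`. Hence the
facets containing the ridge complementary to `insert k P` correspond to the members of `E`
contained in `insert k P`. Such a member misses exactly one element `k'` of `insert k P`:
for `k' = k` it is `P` itself, and for `k' ∈ P` it is `(P \ {k'}) ∪ {k}`. So the number of facets
through the ridge is one more than the number of substitutes `k' ∈ P` for `k`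
(`card_facets_eq`), and it equals two precisely when the substitute exists and is unique. For
`k ∈ P` the substitution condition is automatic (`existsUnique_of_mem`), by cardinality.
-/

open Classical

/-- `E` is a fundamental set of type `(M, n)`: a nonempty family of subsets of the
ground set `{0, …, n-1}` (our encoding of `{1, …, n}`), each of cardinality `M`. -/
def IsFundamentalSet (M n : ℕ) (E : Finset (Finset ℕ)) : Prop :=
  E.Nonempty ∧ ∀ P ∈ E, P ⊆ Finset.range n ∧ P.card = M

/-- A subset of the ground set `{0, …, n-1}` is acceptable if it contains a member of `E`. -/
def Acceptable (E : Finset (Finset ℕ)) (A : Finset ℕ) : Prop :=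
  ∃ P ∈ E, P ⊆ A

/-- The associated complex of `E`: all subsets of the ground set `{0, …, n-1}` whose
complement in the ground set is acceptable. -/
def AssocComplex (n : ℕ) (E : Finset (Finset ℕ)) : Set (Finset ℕ) :=
  {σ | σ ⊆ Finset.range n ∧ Acceptable E (Finset.range n \ σ)}

/-- Facets: the maximal faces of the associated complex. -/
def IsFacet (n : ℕ) (E : Finset (Finset ℕ)) (σ : Finset ℕ) : Prop :=
  σ ∈ AssocComplex n E ∧ ∀ τ ∈ AssocComplex n E, σ ⊆ τ → τ = σ

/-- Facets (maximal faces) of an abstract simplicial complex given as a finite family. -/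
def IsFacetOf (P : Finset (Finset ℕ)) (σ : Finset ℕ) : Prop :=
  σ ∈ P ∧ ∀ τ ∈ P, σ ⊆ τ → τ = σ

/-- The SEU (Substitute's Existence and Uniqueness) property. -/
def SEU (n : ℕ) (E : Finset (Finset ℕ)) : Prop :=
  ∀ P ∈ E, ∀ k ∈ Finset.range n, ∃! k', k' ∈ P ∧ (P \ {k'}) ∪ {k} ∈ E

/-- `E` is minimal for the SEU property: it satisfies SEU and no proper nonempty
subfamily satisfies SEU. -/
def MinimalSEU (n : ℕ) (E : Finset (Finset ℕ)) : Prop :=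
  SEU n E ∧ ∀ E' : Finset (Finset ℕ), E' ⊂ E → E'.Nonempty → ¬ SEU n E'

/-- Ridges of the associated complex of a fundamental set of type `(M, n)`:
faces of cardinality `n - M - 1`. -/
def IsRidge (M n : ℕ) (E : Finset (Finset ℕ)) (Q : Finset ℕ) : Prop :=
  Q ∈ AssocComplex n E ∧ Q.card + 1 = n - M

/-- The facets are exactly the complements of the members of `E`; since these all have
the same cardinality, no two such complements are strictly nested. -/
lemma isFacet_iff {M n : ℕ} {E : Finset (Finset ℕ)} (hE : IsFundamentalSet M n E)
    (σ : Finset ℕ) :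
    IsFacet n E σ ↔ σ ⊆ Finset.range n ∧ Finset.range n \ σ ∈ E := by
  constructor
  · rintro ⟨⟨hσ, P, hP, hPσ⟩, hmax⟩
    refine ⟨hσ, ?_⟩
    have hPn := (hE.2 P hP).1
    have h := hmax (Finset.range n \ P)
      ⟨Finset.sdiff_subset, P, hP, (Finset.sdiff_sdiff_eq_self hPn).ge⟩
      (fun x hx => Finset.mem_sdiff.2 ⟨hσ hx, fun hxP => (Finset.mem_sdiff.1 (hPσ hxP)).2 hx⟩)
    rwa [← h, Finset.sdiff_sdiff_eq_self hPn]
  · rintro ⟨hσ, hmem⟩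
    refine ⟨⟨hσ, _, hmem, subset_rfl⟩, ?_⟩
    rintro τ ⟨hτ, P, hP, hPτ⟩ hστ
    have hsub : Finset.range n \ τ ⊆ Finset.range n \ σ := Finset.sdiff_subset_sdiff subset_rfl hστ
    have hPeq : P = Finset.range n \ σ := Finset.eq_of_subset_of_card_le (hPτ.trans hsub)
      (by rw [(hE.2 P hP).2, (hE.2 _ hmem).2])
    have heq : Finset.range n \ τ = Finset.range n \ σ := hsub.antisymm (hPeq ▸ hPτ)
    rw [← Finset.sdiff_sdiff_eq_self hτ, heq, Finset.sdiff_sdiff_eq_self hσ]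

lemma sdiff_union_eq_erase {P : Finset ℕ} {k k' : ℕ} (hk : k ∉ P) (hk' : k' ∈ P) :
    (P \ {k'}) ∪ {k} = (insert k P).erase k' := by
  ext x
  simp only [Finset.mem_union, Finset.mem_sdiff, Finset.mem_singleton, Finset.mem_erase,
    Finset.mem_insert]
  grind

/-- The facets through the ridge complementary to `insert k P` correspond to the substitutes
`k' ∈ P` for `k`, together with one further facet, the complement of `P` itself. -/
lemma card_facets_eq {M n : ℕ} {E : Finset (Finset ℕ)} (hE : IsFundamentalSet M n E)
    {P : Finset ℕ} (hP : P ∈ E) {k : ℕ} (hk : k ∈ Finset.range n) (hkP : k ∉ P) :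
    ((Finset.range n).powerset.filter fun σ =>
        IsFacet n E σ ∧ Finset.range n \ insert k P ⊆ σ).card =
      (P.filter fun k' => (P \ {k'}) ∪ {k} ∈ E).card + 1 := by
  obtain ⟨hPn, hPM⟩ := hE.2 P hP
  have hA : insert k P ⊆ Finset.range n := Finset.insert_subset hk hPn
  have hcard : (insert k P).card = M + 1 := by rw [Finset.card_insert_of_notMem hkP, hPM]
  have himage : ((Finset.range n).powerset.filter fun σ =>
        IsFacet n E σ ∧ Finset.range n \ insert k P ⊆ σ) =
      ((insert k P).filter fun k' => (insert k P).erase k' ∈ E).image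
        fun k' => Finset.range n \ (insert k P).erase k' := by
    ext σ
    simp only [Finset.mem_filter, Finset.mem_powerset, Finset.mem_image, isFacet_iff hE]
    constructor
    · rintro ⟨hσ, ⟨-, hmem⟩, hQ⟩
      have hsub : Finset.range n \ σ ⊆ insert k P := by
        intro x hx
        by_contra hxA
        exact (Finset.mem_sdiff.1 hx).2
          (hQ (Finset.mem_sdiff.2 ⟨(Finset.mem_sdiff.1 hx).1, hxA⟩))
      have h1 : (insert k P \ (Finset.range n \ σ)).card = 1 := by
        rw [Finset.card_sdiff_of_subset hsub, hcard, (hE.2 _ hmem).2]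
        omega
      obtain ⟨a, ha⟩ := Finset.card_eq_one.1 h1
      have heq : (insert k P).erase a = Finset.range n \ σ := by
        rw [Finset.erase_eq, ← ha, Finset.sdiff_sdiff_eq_self hsub]
      refine ⟨a, ⟨?_, heq ▸ hmem⟩, ?_⟩
      · exact (Finset.mem_sdiff.1 (ha ▸ Finset.mem_singleton_self a :
          a ∈ insert k P \ (Finset.range n \ σ))).1
      · rw [heq, Finset.sdiff_sdiff_eq_self hσ]
    · rintro ⟨a, ⟨ha, hmem⟩, rfl⟩
      refine ⟨Finset.sdiff_subset, ⟨Finset.sdiff_subset, ?_⟩,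
        Finset.sdiff_subset_sdiff subset_rfl (Finset.erase_subset _ _)⟩
      rwa [Finset.sdiff_sdiff_eq_self ((Finset.erase_subset _ _).trans hA)]
  rw [himage, Finset.card_image_of_injOn, Finset.filter_insert, Finset.erase_insert hkP,
    if_pos hP, Finset.card_insert_of_notMem (by simp [hkP])]
  · congr 2
    refine Finset.filter_congr fun k' hk' => ?_
    rw [sdiff_union_eq_erase hkP hk']
  · intro a ha b hb hab
    have haA := (Finset.mem_filter.1 (Finset.mem_coe.1 ha)).1
    have h := congrArg (Finset.range n \ ·) hab
    simp only [Finset.sdiff_sdiff_eq_self ((Finset.erase_subset _ _).trans hA)] at h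
    by_contra hne
    exact Finset.notMem_erase a (insert k P) (h ▸ Finset.mem_erase.2 ⟨hne, haA⟩)

/-- For `k ∈ P` the only substitute is `k` itself: removing another element and adding `k` back
lowers the cardinality. -/
lemma existsUnique_of_mem {M n : ℕ} {E : Finset (Finset ℕ)} (hE : IsFundamentalSet M n E)
    {P : Finset ℕ} (hP : P ∈ E) {k : ℕ} (hkP : k ∈ P) :
    ∃! k', k' ∈ P ∧ (P \ {k'}) ∪ {k} ∈ E := by
  refine ⟨k, ⟨hkP, ?_⟩, ?_⟩
  · rwa [Finset.sdiff_union_of_subset (Finset.singleton_subset_iff.2 hkP)]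
  · rintro y ⟨hy, hyE⟩
    by_contra hne
    have heq : (P \ {y}) ∪ {k} = P.erase y := by
      ext x
      simp only [Finset.mem_union, Finset.mem_sdiff, Finset.mem_singleton, Finset.mem_erase]
      grind
    have h1 := (hE.2 _ hyE).2
    rw [heq] at h1
    have h2 := Finset.card_erase_lt_of_mem hy
    rw [h1, (hE.2 P hP).2] at h2
    exact lt_irrefl _ h2

/-- Let `E` be a fundamental set of type `(M, n)` with associated
complex `P`.  Then `E` satisfies the SEU property if and only if every ridge of `P`
is contained in exactly two facets of `P`. -/
theorem statement3 (M n : ℕ) (E : Finset (Finset ℕ))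
    (hE : IsFundamentalSet M n E) :
    SEU n E ↔
      ∀ Q, IsRidge M n E Q →
        ((Finset.range n).powerset.filter fun σ => IsFacet n E σ ∧ Q ⊆ σ).card = 2 := by
  have key : ∀ P ∈ E, ∀ k ∈ Finset.range n, k ∉ P →
      ((∃! k', k' ∈ P ∧ (P \ {k'}) ∪ {k} ∈ E) ↔
        ((Finset.range n).powerset.filter fun σ =>
          IsFacet n E σ ∧ Finset.range n \ insert k P ⊆ σ).card = 2) := by
    intro P hP k hk hkP
    rw [card_facets_eq hE hP hk hkP, show ∀ m : ℕ, m + 1 = 2 ↔ m = 1 by omega, Finset.card_eq_one]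
    simp only [Finset.ext_iff, Finset.mem_filter, Finset.mem_singleton]
    constructor
    · rintro ⟨a, ha, hu⟩
      exact ⟨a, fun x => ⟨hu x, fun h => h ▸ ha⟩⟩
    · rintro ⟨a, ha⟩
      exact ⟨a, (ha a).2 rfl, fun x => (ha x).1⟩
  constructor
  · rintro hS Q ⟨⟨hQ, P, hP, hPQ⟩, hQc⟩
    have h1 : ((Finset.range n \ Q) \ P).card = 1 := by
      rw [Finset.card_sdiff_of_subset hPQ, Finset.card_sdiff_of_subset hQ, Finset.card_range,
        (hE.2 P hP).2]
      omega
    -- The complement of a ridge has one element `k` more than the member `P` of `E` inside it.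
    obtain ⟨k, hk⟩ := Finset.card_eq_one.1 h1
    have hkm : k ∈ (Finset.range n \ Q) \ P := hk ▸ Finset.mem_singleton_self k
    obtain ⟨hkQ, hkP⟩ := Finset.mem_sdiff.1 hkm
    have hkn := (Finset.mem_sdiff.1 hkQ).1
    have hins : insert k P = Finset.range n \ Q := by
      rw [Finset.insert_eq, ← hk, Finset.sdiff_union_of_subset hPQ]
    have h := (key P hP k hkn hkP).1 (hS P hP k hkn)
    rwa [hins, Finset.sdiff_sdiff_eq_self hQ] at h
  · intro hR P hP k hk
    by_cases hkP : k ∈ P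
    · exact existsUnique_of_mem hE hP hkP
    · obtain ⟨hPn, hPM⟩ := hE.2 P hP
      have hA : insert k P ⊆ Finset.range n := Finset.insert_subset hk hPn
      refine (key P hP k hk hkP).2 (hR _ ⟨⟨Finset.sdiff_subset, P, hP, ?_⟩, ?_⟩)
      · rw [Finset.sdiff_sdiff_eq_self hA]
        exact Finset.subset_insert k P
      · have hle := Finset.card_le_card hA
        rw [Finset.card_range, Finset.card_insert_of_notMem hkP, hPM] at hle
        rw [Finset.card_sdiff_of_subset hA, Finset.card_range, Finset.card_insert_of_notMem hkP,
          hPM]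
        omega
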